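/- Let Σ = (PROP, NOM) be a hybrid signature and let φ(x) be a first-order formula over Σ° whose only variables are world variables and whose sole free variable is x ∈ WVAR. Then for every Kripke structure M over Σ (viewed as a Σ°-structure) and every m ∈ M: M ⊨ φ[m] if and only if M, m ⊩ SBT(φ(x)), where SBT(φ(x)) = ∃x (x ∧ F(φ)) is the standard back translation. -/

import Mathlib

set_option autoImplicit false

/-! ## Hybrid logic: Kripke structures, hybrid formulas, satisfaction -/

/-- A Kripke structure over a hybrid signature `Σ = (P, Nom)`:
`P` the propositional variables, `Nom` the nominals. -/
structure Kripke (P : Type) (Nom : Type) : Type 1 where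
  W : Type
  R : W → W → Prop
  V : P → W → Prop
  nom : Nom → W

/-- Hybrid formulas over `Σ = (P, Nom)`; the world variables are the natural numbers.
`bind x φ` is `↓x φ`, `atv x φ` is `@_x φ`, `atn s φ` is `@_s φ`, `exq x φ` is `∃x φ`. -/
inductive HForm (P : Type) (Nom : Type) : Type
  | bot  : HForm P Nom
  | prop (p : P) : HForm P Nom
  | nom  (s : Nom) : HForm P Nom
  | wvar (x : ℕ) : HForm P Nom
  | neg  (φ : HForm P Nom) : HForm P Nom
  | or   (φ ψ : HForm P Nom) : HForm P Nom
  | dia  (φ : HForm P Nom) : HForm P Nom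
  | bind (x : ℕ) (φ : HForm P Nom) : HForm P Nom
  | atv  (x : ℕ) (φ : HForm P Nom) : HForm P Nom
  | atn  (s : Nom) (φ : HForm P Nom) : HForm P Nom
  | exq  (x : ℕ) (φ : HForm P Nom) : HForm P Nom

namespace HForm

/-- Conjunction, as an abbreviation `φ ∧ ψ := ¬(¬φ ∨ ¬ψ)`. -/
def and {P Nom : Type} (φ ψ : HForm P Nom) : HForm P Nom := .neg (.or (.neg φ) (.neg ψ))

/-- Free world variables of a hybrid formula. -/
def free {P Nom : Type} : HForm P Nom → Set ℕ
  | .bot => ∅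
  | .prop _ => ∅
  | .nom _ => ∅
  | .wvar x => {x}
  | .neg φ => φ.free
  | .or φ ψ => φ.free ∪ ψ.free
  | .dia φ => φ.free
  | .bind x φ => φ.free \ {x}
  | .atv x φ => insert x φ.free
  | .atn _ φ => φ.free
  | .exq x φ => φ.free \ {x}

/-- The degree of a hybrid formula. -/
def deg {P Nom : Type} : HForm P Nom → ℕ
  | .bot => 0
  | .prop _ => 0
  | .nom _ => 0
  | .wvar _ => 0
  | .neg φ => φ.deg
  | .or φ ψ => max φ.deg ψ.deg
  | .dia φ => φ.deg + 1
  | .bind _ φ => φ.deg + 1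
  | .atv _ φ => φ.deg
  | .atn _ φ => φ.deg
  | .exq _ φ => φ.deg + 1

end HForm

/-- The hybrid language features beyond basic modal logic: `@`, `↓`, `∃`, nominals. -/
inductive Feature : Type
  | at_ | bind | exq | nom
deriving DecidableEq

/-- Membership of a hybrid formula in the `F`-fragment: it uses only operators from `F`,
and nominals only if `Feature.nom ∈ F`. -/
def HForm.inFragment {P Nom : Type} (F : Set Feature) : HForm P Nom → Prop
  | .bot => True
  | .prop _ => True
  | .nom _ => Feature.nom ∈ F
  | .wvar _ => True
  | .neg φ => φ.inFragment F
  | .or φ ψ => φ.inFragment F ∧ ψ.inFragment F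
  | .dia φ => φ.inFragment F
  | .bind _ φ => Feature.bind ∈ F ∧ φ.inFragment F
  | .atv _ φ => Feature.at_ ∈ F ∧ φ.inFragment F
  | .atn _ φ => Feature.at_ ∈ F ∧ Feature.nom ∈ F ∧ φ.inFragment F
  | .exq _ φ => Feature.exq ∈ F ∧ φ.inFragment F

/-- Hybrid satisfaction `M, ν, m ⊩ φ`. -/
def HSat {P Nom : Type} (M : Kripke P Nom) : (ℕ → M.W) → M.W → HForm P Nom → Prop
  | _, _, .bot => False
  | _, m, .prop p => M.V p m
  | _, m, .nom s => m = M.nom s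
  | ν, m, .wvar x => m = ν x
  | ν, m, .neg φ => ¬ HSat M ν m φ
  | ν, m, .or φ ψ => HSat M ν m φ ∨ HSat M ν m ψ
  | ν, m, .dia φ => ∃ m', M.R m m' ∧ HSat M ν m' φ
  | ν, m, .bind x φ => HSat M (Function.update ν x m) m φ
  | ν, m, .atv x φ => HSat M ν (ν x) φ
  | ν, m, .atn s φ => HSat M ν (M.nom s) φ
  | ν, m, .exq x φ => ∃ m' : M.W, HSat M (Function.update ν x m') m φ

/-- Satisfaction of a hybrid sentence: `M, m ⊩ φ` (the assignment is irrelevant). -/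
def HSatS {P Nom : Type} (M : Kripke P Nom) (m : M.W) (φ : HForm P Nom) : Prop :=
  ∀ ν : ℕ → M.W, HSat M ν m φ

/-- `F`-elementary equivalence of pointed Kripke structures. -/
def FElemEquiv {P Nom : Type} (F : Set Feature) (M : Kripke P Nom) (m : M.W)
    (N : Kripke P Nom) (n : N.W) : Prop :=
  ∀ ψ : HForm P Nom, ψ.inFragment F → ψ.free = ∅ → (HSatS M m ψ ↔ HSatS N n ψ)

/-! ## First-order logic over the corresponding signature `Σ°` -/

/-- First-order variables: the world variables `Sum.inl n` together with the two
designated variables `x = Sum.inr false` and `y = Sum.inr true`. -/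
abbrev FVar : Type := ℕ ⊕ Bool

/-- First-order terms over `Σ°` with variables from `V`: variables and nominal constants. -/
inductive FOTerm (Nom V : Type) : Type
  | var (v : V)
  | nom (s : Nom)

/-- First-order formulas over `Σ°` (one binary relation `R`, a unary predicate for each
propositional variable, a constant for each nominal), with variables from `V`. -/
inductive FOForm (P Nom V : Type) : Type
  | bot
  | pred (p : P) (t : FOTerm Nom V)
  | rel (t u : FOTerm Nom V)
  | eq (t u : FOTerm Nom V)
  | neg (φ : FOForm P Nom V)
  | or (φ ψ : FOForm P Nom V)
  | ex (v : V) (φ : FOForm P Nom V)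

/-- First-order conjunction, `φ ∧ ψ := ¬(¬φ ∨ ¬ψ)`. -/
def FOForm.and {P Nom V : Type} (φ ψ : FOForm P Nom V) : FOForm P Nom V :=
  .neg (.or (.neg φ) (.neg ψ))

/-- Value of a term under an assignment, in a Kripke structure viewed as a `Σ°`-structure. -/
def FOTerm.val {P Nom V : Type} (M : Kripke P Nom) (g : V → M.W) : FOTerm Nom V → M.W
  | .var v => g v
  | .nom s => M.nom s

/-- First-order satisfaction in a Kripke structure viewed as a `Σ°`-structure. -/
def FOSat {P Nom V : Type} [DecidableEq V] (M : Kripke P Nom) (g : V → M.W) :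
    FOForm P Nom V → Prop
  | .bot => False
  | .pred p t => M.V p (t.val M g)
  | .rel t u => M.R (t.val M g) (u.val M g)
  | .eq t u => t.val M g = u.val M g
  | .neg φ => ¬ FOSat M g φ
  | .or φ ψ => FOSat M g φ ∨ FOSat M g ψ
  | .ex v φ => ∃ w : M.W, FOSat M (Function.update g v w) φ

/-- Variables of a first-order term. -/
def FOTerm.fvars {Nom V : Type} : FOTerm Nom V → Set V
  | .var v => {v}
  | .nom _ => ∅

/-- Free variables of a first-order formula. -/
def FOForm.free {P Nom V : Type} : FOForm P Nom V → Set V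
  | .bot => ∅
  | .pred _ t => t.fvars
  | .rel t u => t.fvars ∪ u.fvars
  | .eq t u => t.fvars ∪ u.fvars
  | .neg φ => φ.free
  | .or φ ψ => φ.free ∪ ψ.free
  | .ex v φ => φ.free \ {v}

/-- The standard translation `stdTr b φ`; `b : Bool` chooses the current designated
variable (`false` for `x`, `true` for `y`). -/
def stdTr {P Nom : Type} : Bool → HForm P Nom → FOForm P Nom FVar
  | b, .bot => .bot
  | b, .prop p => .pred p (.var (Sum.inr b))
  | b, .nom s => .eq (.nom s) (.var (Sum.inr b))
  | b, .wvar z => .eq (.var (Sum.inl z)) (.var (Sum.inr b))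
  | b, .neg φ => .neg (stdTr b φ)
  | b, .or φ ψ => .or (stdTr b φ) (stdTr b ψ)
  | b, .dia φ => .ex (Sum.inr (!b))
      (FOForm.and (.rel (.var (Sum.inr b)) (.var (Sum.inr (!b)))) (stdTr (!b) φ))
  | b, .bind z φ => .ex (Sum.inl z)
      (FOForm.and (.eq (.var (Sum.inl z)) (.var (Sum.inr b))) (stdTr b φ))
  | b, .atv z φ => .ex (Sum.inr (!b))
      (FOForm.and (.eq (.var (Sum.inr (!b))) (.var (Sum.inl z))) (stdTr (!b) φ))
  | b, .atn s φ => .ex (Sum.inr (!b))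
      (FOForm.and (.eq (.var (Sum.inr (!b))) (.nom s)) (stdTr (!b) φ))
  | b, .exq z φ => .ex (Sum.inl z) (stdTr b φ)

/-- `M ⊨ φ[m]`: satisfaction of a first-order formula whose free variable is the
designated variable `x = Sum.inr false`, under the assignment sending `x` to `m`. -/
def FOSatAt {P Nom : Type} (M : Kripke P Nom) (m : M.W) (φ : FOForm P Nom FVar) : Prop :=
  ∀ g : FVar → M.W, g (Sum.inr false) = m → FOSat M g φ

/-! ## Bisimulations -/

/-- Ordinary bisimulations between Kripke structures. -/
def IsBisim {P Nom : Type} (M N : Kripke P Nom) (B : M.W → N.W → Prop) : Prop :=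
  ∀ m n, B m n →
    (∀ p, M.V p m ↔ N.V p n) ∧
    (∀ m', M.R m m' → ∃ n', N.R n n' ∧ B m' n') ∧
    (∀ n', N.R n n' → ∃ m', M.R m m' ∧ B m' n')

/-- Quasi-injectivity of a bisimulation. -/
def QuasiInjective {P Nom : Type} (M N : Kripke P Nom) (B : M.W → N.W → Prop) : Prop :=
  (∀ m n n', B m n → B m n' → n ≠ n' →
     ¬ Relation.ReflTransGen N.R n n' ∧ ¬ Relation.ReflTransGen N.R n' n) ∧
  (∀ m m' n, B m n → B m' n → m ≠ m' →
     ¬ Relation.ReflTransGen M.R m m' ∧ ¬ Relation.ReflTransGen M.R m' m)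

/-- The type of relations `B_k ⊆ (M^k × M) × (N^k × N)`. -/
abbrev KRel {P Nom : Type} (M N : Kripke P Nom) (k : ℕ) : Type :=
  (Fin k → M.W) → M.W → (Fin k → N.W) → N.W → Prop

section BisimConds

variable {P Nom : Type} (M N : Kripke P Nom) {k : ℕ}

/-- Condition (prop). -/
def PropCond (B : KRel M N k) : Prop :=
  ∀ mb m nb n, B mb m nb n → ∀ p, M.V p m ↔ N.V p n

/-- Condition (wvar). -/
def WvarCond (B : KRel M N k) : Prop :=
  ∀ mb m nb n, B mb m nb n → ∀ j : Fin k, mb j = m ↔ nb j = n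

/-- Condition (forth). -/
def ForthCond (B : KRel M N k) : Prop :=
  ∀ mb m nb n, B mb m nb n → ∀ m', M.R m m' → ∃ n', N.R n n' ∧ B mb m' nb n'

/-- Condition (back). -/
def BackCond (B : KRel M N k) : Prop :=
  ∀ mb m nb n, B mb m nb n → ∀ n', N.R n n' → ∃ m', M.R m m' ∧ B mb m' nb n'

/-- Condition (nom). -/
def NomCond (B : KRel M N k) : Prop :=
  ∀ mb m nb n, B mb m nb n → ∀ s : Nom, m = M.nom s ↔ n = N.nom s

/-- Condition (atv). -/
def AtvCond (B : KRel M N k) : Prop :=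
  ∀ mb m nb n, B mb m nb n → ∀ j : Fin k, B mb (mb j) nb (nb j)

/-- Condition (atn). -/
def AtnCond (B : KRel M N k) : Prop :=
  ∀ mb m nb n, B mb m nb n → ∀ s : Nom, B mb (M.nom s) nb (N.nom s)

/-- Condition (bind). -/
def BindCond (B : KRel M N k) : Prop :=
  ∀ mb m nb n, B mb m nb n → ∀ j : Fin k,
    B (Function.update mb j m) m (Function.update nb j n) n

/-- Condition (ex). -/
def ExCond (B : KRel M N k) : Prop :=
  ∀ mb m nb n, B mb m nb n → ∀ j : Fin k,
    (∀ u : M.W, ∃ u' : N.W, B (Function.update mb j u) m (Function.update nb j u') n) ∧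
    (∀ u' : N.W, ∃ u : M.W, B (Function.update mb j u) m (Function.update nb j u') n)

/-- A `k`-bisimulation: conditions (prop), (wvar), (forth), (back). -/
def IsKBisim (B : KRel M N k) : Prop :=
  PropCond M N B ∧ WvarCond M N B ∧ ForthCond M N B ∧ BackCond M N B

/-- The conditions `cond(F)` for a feature set `F`, for a single relation `B_k`. -/
def SatisfiesConds (F : Set Feature) (B : KRel M N k) : Prop :=
  (Feature.nom ∈ F → NomCond M N B) ∧
  (Feature.bind ∈ F → BindCond M N B) ∧
  (Feature.at_ ∈ F → AtvCond M N B) ∧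
  (Feature.exq ∈ F → ExCond M N B) ∧
  (Feature.at_ ∈ F → Feature.nom ∈ F → AtnCond M N B)

end BisimConds

/-- An `F`-ω-bisimulation: a non-empty family `(B_k)` of `k`-bisimulations satisfying
(ext) and all the conditions in `cond(F)`. -/
def IsFOmegaBisim {P Nom : Type} (F : Set Feature) (M N : Kripke P Nom)
    (B : (k : ℕ) → KRel M N k) : Prop :=
  (∀ k, IsKBisim M N (B k)) ∧
  (∃ k mb m nb n, B k mb m nb n) ∧
  (∀ k (mb : Fin k → M.W) m nb n, B k mb m nb n →
     B (k+1) (Fin.snoc mb m) m (Fin.snoc nb n) n) ∧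
  (∀ k, SatisfiesConds M N F (B (k : ℕ)))

/-! ## `(k,ℓ)`- and `(ω,ℓ)`-bisimulations -/

section KL

variable {P Nom : Type} (M N : Kripke P Nom)

/-- A basic `(k,ℓ)`-bisimulation from `M` to `N` (the relations `Z i` for `i ≤ ℓ`). -/
def IsBasicKLBisim (k ℓ : ℕ) (Z : ℕ → KRel M N k) : Prop :=
  (∀ i ≤ ℓ, PropCond M N (Z i) ∧ WvarCond M N (Z i)) ∧
  (∀ i, 0 < i → i ≤ ℓ → ∀ mb m nb n, Z (i-1) mb m nb n →
    (∀ u, M.R m u → ∃ u', N.R n u' ∧ Z i mb u nb u') ∧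
    (∀ u', N.R n u' → ∃ u, M.R m u ∧ Z i mb u nb u'))

/-- The conditions `cond(F)` for a `(k,ℓ)`-bisimulation: (nom), (atv), (atn) are
required within each `Z i` (`i ≤ ℓ`), whereas (bind) and (ex) pass from `Z (i-1)`
to `Z i` for `0 < i ≤ ℓ`. -/
def KLSatisfiesConds (F : Set Feature) (k ℓ : ℕ) (Z : ℕ → KRel M N k) : Prop :=
  (Feature.nom ∈ F → ∀ i ≤ ℓ, NomCond M N (Z i)) ∧
  (Feature.at_ ∈ F → ∀ i ≤ ℓ, AtvCond M N (Z i)) ∧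
  (Feature.at_ ∈ F → Feature.nom ∈ F → ∀ i ≤ ℓ, AtnCond M N (Z i)) ∧
  (Feature.bind ∈ F → ∀ i, 0 < i → i ≤ ℓ → ∀ mb m nb n, Z (i-1) mb m nb n →
     ∀ j : Fin k, Z i (Function.update mb j m) m (Function.update nb j n) n) ∧
  (Feature.exq ∈ F → ∀ i, 0 < i → i ≤ ℓ → ∀ mb m nb n, Z (i-1) mb m nb n →
     ∀ j : Fin k,
       (∀ u : M.W, ∃ u' : N.W, Z i (Function.update mb j u) m (Function.update nb j u') n) ∧
       (∀ u' : N.W, ∃ u : M.W, Z i (Function.update mb j u) m (Function.update nb j u') n))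

/-- An `F`-`(k,ℓ)`-bisimulation. -/
def IsFKLBisim (F : Set Feature) (k ℓ : ℕ) (Z : ℕ → KRel M N k) : Prop :=
  IsBasicKLBisim M N k ℓ Z ∧ KLSatisfiesConds M N F k ℓ Z

/-- An `F`-`(ω,ℓ)`-bisimulation: a system `(Z^k_i)_{i ≤ ℓ, k ∈ ω}` of
`F`-`(k,ℓ)`-bisimulations satisfying the extensibility condition (ext). -/
def IsFOmegaLBisim (F : Set Feature) (ℓ : ℕ)
    (Z : (k : ℕ) → ℕ → KRel M N k) : Prop :=
  (∀ k, IsFKLBisim M N F k ℓ (Z k)) ∧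
  (∀ k i, 0 < i → i ≤ ℓ → ∀ (mb : Fin k → M.W) m nb n, Z k (i-1) mb m nb n →
     Z (k+1) i (Fin.snoc mb m) m (Fin.snoc nb n) n)

end KL
/-- `@_{F(w)} ψ` for a first-order term `w` over `Σ°` whose variables are world
variables: `@_x ψ` if `w` is a world variable `x`, `@_s ψ` if `w` is a nominal `s`. -/
def atTm {P Nom : Type} (t : FOTerm Nom ℕ) (ψ : HForm P Nom) : HForm P Nom :=
  match t with
  | .var x => .atv x ψ
  | .nom s => .atn s ψ

/-- `F(w)` as a hybrid formula: the world variable or the nominal itself. -/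
def tmH {P Nom : Type} : FOTerm Nom ℕ → HForm P Nom
  | .var x => .wvar x
  | .nom s => .nom s

/-- The standard back translation `F` of Hodkinson and Tahiri, from first-order formulas
over `Σ°` whose variables are world variables to hybrid formulas. -/
def backF {P Nom : Type} : FOForm P Nom ℕ → HForm P Nom
  | .bot => .bot
  | .pred p t => atTm t (.prop p)
  | .rel t u => atTm t (.dia (tmH u))
  | .eq t u => atTm t (tmH u)
  | .neg φ => .neg (backF φ)
  | .or φ ψ => .or (backF φ) (backF ψ)
  | .ex v φ => .exq v (backF φ)

/-- The standard back translation of a formula `φ(x)`:  `SBT(φ(x)) = ∃x (x ∧ F(φ))`. -/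
def SBT {P Nom : Type} (φ : FOForm P Nom ℕ) (x : ℕ) : HForm P Nom :=
  .exq x (HForm.and (.wvar x) (backF φ))
theorem HSat_atTm {P Nom : Type} (M : Kripke P Nom) (g : ℕ → M.W) (m : M.W)
    (t : FOTerm Nom ℕ) (ψ : HForm P Nom) :
    HSat M g m (atTm t ψ) ↔ HSat M g (t.val M g) ψ := by
  cases t <;> simp [atTm, HSat, FOTerm.val]

theorem HSat_tmH {P Nom : Type} (M : Kripke P Nom) (g : ℕ → M.W) (m : M.W)
    (t : FOTerm Nom ℕ) :
    HSat M g m (tmH t) ↔ m = t.val M g := by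
  cases t <;> simp [tmH, HSat, FOTerm.val]

theorem HSat_backF {P Nom : Type} (M : Kripke P Nom) (φ : FOForm P Nom ℕ) :
    ∀ (g : ℕ → M.W) (m : M.W), HSat M g m (backF φ) ↔ FOSat M g φ := by
  induction φ with
  | bot => intro g m; simp [backF, HSat, FOSat]
  | pred p t => intro g m; simp [backF, HSat_atTm, HSat, FOSat]
  | rel t u => intro g m; simp [backF, HSat_atTm, HSat_tmH, HSat, FOSat]
  | eq t u => intro g m; simp [backF, HSat_atTm, HSat_tmH, FOSat]
  | neg φ ih => intro g m; simp [backF, HSat, FOSat, ih]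
  | or φ ψ ih1 ih2 => intro g m; simp [backF, HSat, FOSat, ih1, ih2]
  | ex v φ ih => intro g m; simp [backF, HSat, FOSat, ih]

/-- For a first-order formula `φ` over `Σ°` whose variables are world
variables and whose sole free variable is `x`: `M ⊨ φ[m]` iff `M, m ⊩ SBT(φ(x))`. -/
theorem standard_back_translation_correct {P Nom : Type}
    (φ : FOForm P Nom ℕ) (x : ℕ) (hfree : φ.free = {x})
    (M : Kripke P Nom) (m : M.W) :
    (∀ g : ℕ → M.W, g x = m → FOSat M g φ) ↔ HSatS M m (SBT φ x) := by
  have key : ∀ ν : ℕ → M.W, HSat M ν m (SBT φ x) ↔ FOSat M (Function.update ν x m) φ := by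
    intro ν
    simp [SBT, HForm.and, HSat, HSat_backF]
  constructor
  · intro h ν
    exact (key ν).2 (h _ (by simp))
  · intro h g hg
    have h1 := (key g).1 (h g)
    rwa [← hg, Function.update_eq_self] at h1
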